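/- arXiv:2504.11638 — 2 statements merged into one kernel-verified Lean document; each statement's English description precedes it below -/
import Mathlib

section
/- Let N ≥ 2, let 0 ≤ a < b, and let γ > 0 satisfy γ ≤ b and γ/(N−1) ≥ a. Let P be the product of N copies of the uniform probability measure on [a,b], let M_k(x) be the sum of the k largest coordinates of x ∈ [a,b]^N (M_0 = 0), and define the ordered stopping index k* as the least k ∈ {1,…,N} with M_k ≥ γ, with k* = N if no such k exists. Then E[k*] ≥ 1 + Σ_{k=1}^{N-1} ((γ/k − a)/(b − a))^N (the lower bound of Theorem 1). -/
open MeasureTheory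
open scoped Classical

/-- The uniform probability measure on the interval `[a,b]`. -/
noncomputable def unif (a b : ℝ) : Measure ℝ :=
  (volume (Set.Icc a b))⁻¹ • volume.restrict (Set.Icc a b)

/-- `sumKLargest N k x` is the sum of the `k` largest coordinates of `x : Fin N → ℝ`
(counted with multiplicity); it is `0` for `k = 0`. -/
noncomputable def sumKLargest (N k : ℕ) (x : Fin N → ℝ) : ℝ :=
  (((List.ofFn x).insertionSort (· ≥ ·)).take k).sum

theorem aux_sum_eq (N k : ℕ) (x : Fin N → ℝ) (σ : Equiv.Perm (Fin N))
    (h : ∀ i j, i < j → x (σ j) ≤ x (σ i)) :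
    sumKLargest N k x = ∑ i : Fin N with i.val < k, x (σ i) := by
  unfold sumKLargest
  have h1 : (List.ofFn (x ∘ σ)).Pairwise (· ≥ ·) := by
    rw [List.pairwise_ofFn]
    intro i j hij
    exact h i j hij
  have h2 : (List.ofFn x).insertionSort (· ≥ ·) = List.ofFn (x ∘ σ) := by
    refine List.Perm.eq_of_pairwise' (List.pairwise_insertionSort _ _) h1 ?_
    exact (List.perm_insertionSort _ _).trans (Equiv.Perm.ofFn_comp_perm σ x).symm
  rw [h2, List.sum_take_ofFn]
  rfl

theorem aux_exists_perm (N : ℕ) (x : Fin N → ℝ) :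
    ∃ σ : Equiv.Perm (Fin N), ∀ i j, i < j → x (σ j) ≤ x (σ i) := by
  refine ⟨Tuple.sort (fun i => - x i), fun i j hij => ?_⟩
  have := Tuple.monotone_sort (fun i => - x i) hij.le
  simpa using this

theorem aux_meas (N k : ℕ) (γ : ℝ) : MeasurableSet {x : Fin N → ℝ | γ ≤ sumKLargest N k x} := by
  have : {x : Fin N → ℝ | γ ≤ sumKLargest N k x} =
      ⋃ σ : Equiv.Perm (Fin N), ((⋂ i, ⋂ j, ⋂ (_ : i < j), {x | x (σ j) ≤ x (σ i)}) ∩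
        {x | γ ≤ ∑ i : Fin N with i.val < k, x (σ i)}) := by
    ext x
    simp only [Set.mem_setOf_eq, Set.mem_iUnion, Set.mem_inter_iff, Set.mem_iInter]
    constructor
    · intro hx
      obtain ⟨σ, hσ⟩ := aux_exists_perm N x
      exact ⟨σ, hσ, by rwa [← aux_sum_eq N k x σ hσ]⟩
    · rintro ⟨σ, hσ, hx⟩
      rwa [aux_sum_eq N k x σ hσ]
  rw [this]
  refine MeasurableSet.iUnion fun σ => MeasurableSet.inter ?_ ?_
  · refine MeasurableSet.iInter fun i => MeasurableSet.iInter fun j => MeasurableSet.iInter fun _ => ?_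
    exact measurableSet_le (measurable_pi_apply _) (measurable_pi_apply _)
  · refine measurableSet_le measurable_const ?_
    exact Finset.measurable_sum _ fun i _ => measurable_pi_apply _

theorem aux_list (c : ℝ) (l : List ℝ) (hl : l ≠ []) (h : ∀ y ∈ l, y < c) :
    l.sum < l.length * c := by
  induction l with
  | nil => exact absurd rfl hl
  | cons y t ih =>
    have hy := h y (by simp)
    by_cases ht : t = []
    · subst ht; simpa using hy
    · have := ih ht (fun z hz => h z (by simp [hz]))
      simp only [List.sum_cons, List.length_cons]
      push_cast
      linarith

theorem aux_lt (N j k : ℕ) (γ : ℝ) (hγ : 0 < γ) (hj : 1 ≤ j) (hjk : j ≤ k) (hjN : j ≤ N)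
    (x : Fin N → ℝ) (hx : ∀ i, x i < γ / k) : sumKLargest N j x < γ := by
  unfold sumKLargest
  have hlen : (((List.ofFn x).insertionSort (· ≥ ·)).take j).length = j := by
    simp [hjN]
  have := aux_list (γ / k) (((List.ofFn x).insertionSort (· ≥ ·)).take j) (by
    intro h0
    rw [h0] at hlen
    simp at hlen
    omega) (by
    intro y hy
    have hy := List.mem_of_mem_take hy
    rw [List.mem_insertionSort, List.mem_ofFn] at hy
    obtain ⟨i, rfl⟩ := hy
    exact hx i)
  rw [hlen] at this
  refine this.trans_le ?_
  have hk0 : (0 : ℝ) < k := by exact_mod_cast (by omega : 0 < k)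
  have hjk' : (j : ℝ) ≤ k := by exact_mod_cast hjk
  rw [mul_div_assoc', div_le_iff₀ hk0]
  nlinarith

theorem aux_unif_prob (a b : ℝ) (hab : a < b) : IsProbabilityMeasure (unif a b) := by
  constructor
  have h : 0 < b - a := sub_pos.2 hab
  simp only [unif, Measure.smul_apply, Measure.restrict_apply_univ, smul_eq_mul, Real.volume_Icc]
  exact ENNReal.inv_mul_cancel (by simpa using hab) (by simp)

theorem aux_unif_Iio (a b c : ℝ) (hab : a < b) (hac : a ≤ c) (hcb : c ≤ b) :
    (unif a b) (Set.Iio c) = ENNReal.ofReal ((c - a) / (b - a)) := by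
  have h : 0 < b - a := sub_pos.2 hab
  have hs : Set.Iio c ∩ Set.Icc a b = Set.Ico a c := by
    ext y
    simp only [Set.mem_inter_iff, Set.mem_Iio, Set.mem_Icc, Set.mem_Ico]
    constructor
    · rintro ⟨h1, h2, h3⟩; exact ⟨h2, h1⟩
    · rintro ⟨h1, h2⟩; exact ⟨h2, h1, by linarith⟩
  simp only [unif, Measure.smul_apply, smul_eq_mul, Real.volume_Icc]
  rw [Measure.restrict_apply measurableSet_Iio, hs, Real.volume_Ico, ENNReal.ofReal_div_of_pos h,
    mul_comm, div_eq_mul_inv]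

/-- Lower bound of Theorem 1: for the ordered sequential estimation scheme,
`E[k*] ≥ 1 + ∑_{k=1}^{N-1} ((γ/k - a)/(b - a))^N`. -/
theorem stmt_7 (N : ℕ) (hN : 2 ≤ N) (a b : ℝ) (ha : 0 ≤ a) (hab : a < b)
    (γ : ℝ) (hγ : 0 < γ) (hγb : γ ≤ b) (hγa : a ≤ γ / ((N - 1 : ℕ) : ℝ))
    (P : Measure (Fin N → ℝ)) (hP : P = Measure.pi fun _ => unif a b)
    (kstar : (Fin N → ℝ) → ℕ)
    (hk : ∀ x, kstar x =
      if ∃ k, (1 ≤ k ∧ k ≤ N) ∧ γ ≤ sumKLargest N k x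
      then sInf {k | (1 ≤ k ∧ k ≤ N) ∧ γ ≤ sumKLargest N k x}
      else N) :
    1 + ∑ k ∈ Finset.Icc 1 (N - 1), ((γ / k - a) / (b - a)) ^ N ≤
      ∫ x, (kstar x : ℝ) ∂P := by
  haveI := aux_unif_prob a b hab
  haveI hPp : IsProbabilityMeasure P := by rw [hP]; infer_instance
  -- characterisation of the sublevel sets
  have hle : ∀ x n, kstar x ≤ n ↔
      (N ≤ n ∨ ∃ k, (1 ≤ k ∧ k ≤ N ∧ k ≤ n) ∧ γ ≤ sumKLargest N k x) := by
    intro x n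
    rw [hk x]
    split_ifs with h
    · have hmem := Nat.sInf_mem (s := {k | (1 ≤ k ∧ k ≤ N) ∧ γ ≤ sumKLargest N k x}) h
      constructor
      · intro hn
        exact Or.inr ⟨_, ⟨hmem.1.1, hmem.1.2, hn⟩, hmem.2⟩
      · rintro (hn | ⟨k, ⟨h1, h2, h3⟩, h4⟩)
        · exact hmem.1.2.trans hn
        · exact le_trans (Nat.sInf_le ⟨⟨h1, h2⟩, h4⟩) h3
    · constructor
      · exact Or.inl
      · rintro (hn | ⟨k, ⟨h1, h2, h3⟩, h4⟩)
        · exact hn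
        · exact absurd ⟨k, ⟨h1, h2⟩, h4⟩ h
  have hmeas : Measurable kstar := by
    refine measurable_of_Iic fun n => ?_
    have : kstar ⁻¹' Set.Iic n = {_x | N ≤ n} ∪
        ⋃ k, ⋃ (_ : 1 ≤ k ∧ k ≤ N ∧ k ≤ n), {x | γ ≤ sumKLargest N k x} := by
      ext x
      simp only [Set.mem_preimage, Set.mem_Iic, hle, Set.mem_union, Set.mem_setOf_eq,
        Set.mem_iUnion, exists_prop]
    rw [this]
    refine MeasurableSet.union (MeasurableSet.const _) ?_
    exact MeasurableSet.iUnion fun k => MeasurableSet.iUnion fun _ => aux_meas N k γ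
  have hmeas' : Measurable fun x => (kstar x : ℝ) := measurable_from_top.comp hmeas
  have hint : Integrable (fun x => (kstar x : ℝ)) P := by
    refine Integrable.of_bound hmeas'.aestronglyMeasurable (N : ℝ) (Filter.Eventually.of_forall ?_)
    intro x
    have : kstar x ≤ N := (hle x N).2 (Or.inl le_rfl)
    simpa using this
  let S : ℕ → Set (Fin N → ℝ) := fun k => Set.univ.pi fun _ => Set.Iio (γ / k)
  have hSm : ∀ k, MeasurableSet (S k) := fun k =>
    MeasurableSet.univ_pi fun _ => measurableSet_Iio
  have hSi : ∀ k, Integrable ((S k).indicator fun _ => (1 : ℝ)) P := fun k =>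
    (integrable_const _).indicator (hSm k)
  have hSP : ∀ k ∈ Finset.Icc 1 (N - 1),
      ∫ x, (S k).indicator (fun _ => (1 : ℝ)) x ∂P = ((γ / k - a) / (b - a)) ^ N := by
    intro k hkk
    rw [Finset.mem_Icc] at hkk
    have hk1 : (1 : ℝ) ≤ k := by exact_mod_cast hkk.1
    have hk2 : (k : ℝ) ≤ ((N - 1 : ℕ) : ℝ) := by exact_mod_cast hkk.2
    have h1 : a ≤ γ / k := hγa.trans (by gcongr)
    have h2 : γ / k ≤ b := (div_le_self hγ.le hk1).trans hγb
    have h3 : 0 ≤ (γ / k - a) / (b - a) := div_nonneg (by linarith) (by linarith)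
    rw [integral_indicator (hSm k), setIntegral_const, hP, measureReal_def, Measure.pi_pi]
    simp only [aux_unif_Iio a b _ hab h1 h2]
    simp [ENNReal.toReal_ofReal h3]
  have hpt : ∀ x, 1 + ∑ k ∈ Finset.Icc 1 (N - 1), (S k).indicator (fun _ => (1 : ℝ)) x
      ≤ (kstar x : ℝ) := by
    intro x
    have h1 : 1 ≤ kstar x := by
      by_contra hcon
      rcases (hle x 0).1 (by omega) with h | ⟨k, h, _⟩ <;> omega
    have hsub : (Finset.Icc 1 (N - 1)).filter (fun k => x ∈ S k) ⊆ Finset.Ico 1 (kstar x) := by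
      intro k hkk
      rw [Finset.mem_filter, Finset.mem_Icc] at hkk
      rw [Finset.mem_Ico]
      refine ⟨hkk.1.1, ?_⟩
      by_contra hcon
      rcases (hle x k).1 (by omega) with h | ⟨j, h, hj⟩
      · omega
      · refine absurd hj (not_le.2 (aux_lt N j k γ hγ h.1 h.2.2 h.2.1 x ?_))
        intro i
        exact hkk.2 i (Set.mem_univ i)
    have hcard := Finset.card_le_card hsub
    rw [Nat.card_Ico] at hcard
    simp only [Set.indicator_apply]
    rw [Finset.sum_boole]
    have : 1 + ((Finset.Icc 1 (N - 1)).filter (fun k => x ∈ S k)).card ≤ kstar x := by omega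
    exact_mod_cast this
  calc 1 + ∑ k ∈ Finset.Icc 1 (N - 1), ((γ / k - a) / (b - a)) ^ N
      = ∫ x, (1 + ∑ k ∈ Finset.Icc 1 (N - 1), (S k).indicator (fun _ => (1 : ℝ)) x) ∂P := by
        rw [integral_add (integrable_const _) (integrable_finset_sum _ fun k _ => hSi k),
          integral_finset_sum _ fun k _ => hSi k, Finset.sum_congr rfl hSP]
        simp
    _ ≤ ∫ x, (kstar x : ℝ) ∂P :=
        integral_mono ((integrable_const _).add (integrable_finset_sum _ fun k _ => hSi k)) hint hpt
end

section
/- Let N ≥ 1 and 0 ≤ k ≤ N−1, let 0 ≤ a < b be reals, let γ ∈ ℝ, and let P be the product of N copies of the uniform probability measure on [a,b]. Let M_k(x) be the sum of the k largest coordinates of x ∈ [a,b]^N (M_0 = 0). For 0 ≤ j ≤ k define g_j(x) = max( max(min((γ − kx)/(b − x), k), 0) − j, 0 ) for x ∈ [a,b). Then P({x : M_k(x) ≤ γ}) ≤ [N! / ((N−k−1)! (k!)²)] (1/(b−a))^N Σ_{j=0}^{k} (−1)^j C(k,j) ∫_a^b g_j(s)^k (s − a)^{N−k−1} (b − s)^k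 ds. -/
open MeasureTheory
open scoped Classical

lemma cover_aux (N k : ℕ) (hk : k < N) (x : Fin N → ℝ) :
    ∃ (T : Finset (Fin N)) (i : Fin N), T.card = k ∧ i ∉ T ∧ (∀ j ∈ T, x i ≤ x j) ∧
      (∀ j, j ∉ T → x j ≤ x i) ∧ ∑ j ∈ T, x j = sumKLargest N k x := by
  obtain ⟨σ, hσ⟩ : ∃ σ : Equiv.Perm (Fin N), Antitone (x ∘ σ) := by
    refine ⟨Tuple.sort (fun i => - x i), ?_⟩
    intro i j hij
    have := Tuple.monotone_sort (fun i => - x i) hij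
    simpa using this
  have hs : (List.ofFn x).insertionSort (· ≥ ·) = List.ofFn (x ∘ σ) := by
    apply List.Perm.eq_of_sortedGE
    · exact List.sortedGE_insertionSort
    · exact hσ.sortedGE_ofFn
    · exact (List.perm_insertionSort _ _).trans (σ.ofFn_comp_perm x).symm
  refine ⟨(Finset.univ.filter (fun i : Fin N => i.val < k)).map σ.toEmbedding, σ ⟨k, hk⟩,
    ?_, ?_, ?_, ?_, ?_⟩
  · rw [Finset.card_map, Fin.card_filter_val_lt]
    omega
  · simp
  · intro j hj
    simp only [Finset.mem_map, Finset.mem_filter, Finset.mem_univ, true_and] at hj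
    obtain ⟨l, hl, rfl⟩ := hj
    exact hσ (show l ≤ ⟨k, hk⟩ from Fin.le_def.2 hl.le)
  · intro j hj
    obtain ⟨l, rfl⟩ := σ.surjective j
    simp only [Finset.mem_map, Finset.mem_filter, Finset.mem_univ, true_and] at hj
    have : ¬ l.val < k := fun h => hj ⟨l, h, rfl⟩
    exact hσ (show ⟨k, hk⟩ ≤ l from Fin.le_def.2 (by simpa using this))
  · rw [sumKLargest, hs, List.sum_take_ofFn, Finset.sum_map]
    rfl

/-- truncated power -/
noncomputable def ppow (k : ℕ) (t : ℝ) : ℝ := if 0 ≤ t then t ^ k else 0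

lemma ppow_measurable (k : ℕ) : Measurable (ppow k) := by
  unfold ppow
  exact Measurable.ite measurableSet_Ici (by fun_prop) measurable_const

lemma ppow_abs_le (k : ℕ) {t C : ℝ} (h : |t| ≤ C) : |ppow k t| ≤ C ^ k := by
  unfold ppow
  split_ifs
  · rw [abs_pow]; gcongr
  · simp; exact pow_nonneg ((abs_nonneg _).trans h) _

lemma ppow_ii (k : ℕ) (x y : ℝ) : IntervalIntegrable (ppow k) volume x y := by
  rw [intervalIntegrable_iff]
  refine Measure.integrableOn_of_bounded (M := (max |x| |y|) ^ k) (by simp)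
    (ppow_measurable k).aestronglyMeasurable ?_
  filter_upwards [ae_restrict_mem measurableSet_uIoc] with t ht
  rw [Real.norm_eq_abs]
  apply ppow_abs_le
  have := Set.uIoc_subset_uIcc ht
  rw [Set.mem_uIcc] at this
  rw [abs_le]
  have h1 := le_abs_self x
  have h2 := le_abs_self y
  have h3 := neg_abs_le x
  have h4 := neg_abs_le y
  have h5 := le_max_left |x| |y|
  have h6 := le_max_right |x| |y|
  rcases this with ⟨_, _⟩ | ⟨_, _⟩ <;> constructor <;> linarith

lemma ppow_int0 (k : ℕ) (y : ℝ) : ∫ t in (0:ℝ)..y, ppow k t = ppow (k+1) y / (k+1) := by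
  rcases le_or_gt 0 y with h | h
  · rw [intervalIntegral.integral_congr (g := fun t => t ^ k)]
    · rw [integral_pow]; simp [ppow, h]
    · intro t ht
      rw [Set.uIcc_of_le h] at ht
      simp [ppow, ht.1]
  · have : ∫ t in (0:ℝ)..y, ppow k t = ∫ t in (0:ℝ)..y, (0:ℝ) := by
      apply intervalIntegral.integral_congr_ae
      have : ∀ᵐ t : ℝ, t ≠ 0 := by simp [ae_iff]
      filter_upwards [this] with t ht ht2
      rw [Set.uIoc_of_ge h.le] at ht2
      have : t < 0 := lt_of_le_of_ne ht2.2 ht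
      simp [ppow, this]
    rw [this]; simp [ppow, not_le.2 h]

lemma ppow_int (k : ℕ) (x y : ℝ) :
    ∫ t in x..y, ppow k t = (ppow (k+1) y - ppow (k+1) x) / (k+1) := by
  rw [← intervalIntegral.integral_interval_sub_left (ppow_ii k 0 y) (ppow_ii k 0 x),
    ppow_int0, ppow_int0, sub_div]

lemma pascal_sum (k : ℕ) (f : ℕ → ℝ) :
    ∑ j ∈ Finset.range (k+2), (-1:ℝ)^j * ((k+1).choose j : ℝ) * f j =
    ∑ j ∈ Finset.range (k+1), (-1:ℝ)^j * (k.choose j : ℝ) * (f j - f (j+1)) := by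
  rw [Finset.sum_range_succ']
  simp only [Nat.choose_succ_succ, mul_sub, Finset.sum_sub_distrib, Nat.cast_add, mul_add, add_mul,
    Finset.sum_add_distrib]
  have h1 : ∑ j ∈ Finset.range (k+1), (-1:ℝ)^(j+1) * (k.choose j : ℝ) * f (j+1)
      = - ∑ j ∈ Finset.range (k+1), (-1:ℝ)^j * (k.choose j : ℝ) * f (j+1) := by
    rw [← Finset.sum_neg_distrib]; apply Finset.sum_congr rfl; intros; ring
  have h2 : ∑ j ∈ Finset.range (k+1), (-1:ℝ)^(j+1) * (k.choose (j+1) : ℝ) * f (j+1)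
      + (-1:ℝ)^0 * (k.choose 0 : ℝ) * f 0
      = ∑ j ∈ Finset.range (k+1), (-1:ℝ)^j * (k.choose j : ℝ) * f j := by
    rw [← Finset.sum_range_succ' (fun j => (-1:ℝ)^j * (k.choose j : ℝ) * f j),
      Finset.sum_range_succ]
    simp
  rw [h1, ← h2]
  simp
  ring

lemma irwin_hall (k : ℕ) (s b : ℝ) (hsb : s ≤ b) (γ : ℝ) :
    ((Measure.pi fun _ : Fin k => (volume.restrict (Set.Icc s b) : Measure ℝ))
      {y | ∑ i, y i ≤ γ}).toReal =
    (1 / (k.factorial : ℝ)) * ∑ j ∈ Finset.range (k+1), (-1:ℝ)^j * (k.choose j : ℝ) *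
      ppow k (γ - k * s - j * (b - s)) := by
  induction k generalizing γ with
  | zero =>
    by_cases h : 0 ≤ γ <;> simp [ppow, h, Measure.pi_of_empty]
  | succ k ih =>
    set ν : Measure ℝ := volume.restrict (Set.Icc s b) with hν
    have hmeas : MeasurableSet {p : ℝ × (Fin k → ℝ) | p.1 + ∑ i, p.2 i ≤ γ} :=
      measurableSet_le (by fun_prop) measurable_const
    have h1 : (Measure.pi fun _ : Fin (k+1) => ν) {y | ∑ i, y i ≤ γ} =
        (ν.prod (Measure.pi fun _ : Fin k => ν)) {p | p.1 + ∑ i, p.2 i ≤ γ} := by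
      rw [← (measurePreserving_piFinSuccAbove (fun _ : Fin (k+1) => ν) 0).measure_preimage
        hmeas.nullMeasurableSet]
      congr 1
      ext y
      simp [Fin.sum_univ_succ, MeasurableEquiv.piFinSuccAbove, Fin.insertNthEquiv, Fin.tail]
    rw [h1, Measure.prod_apply hmeas, ← integral_toReal
      (measurable_measure_prodMk_left hmeas).aemeasurable
      (Filter.Eventually.of_forall fun _ => measure_lt_top _ _)]
    have h2 : ∀ u : ℝ, ((Measure.pi fun _ : Fin k => ν)
        (Prod.mk u ⁻¹' {p | p.1 + ∑ i, p.2 i ≤ γ})).toReal =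
        (1 / (k.factorial : ℝ)) * ∑ j ∈ Finset.range (k+1), (-1:ℝ)^j * (k.choose j : ℝ) *
      ppow k (γ - u - k * s - j * (b - s)) := by
      intro u
      rw [← ih]
      congr 2
      ext y
      simp [le_sub_iff_add_le, add_comm]
    simp_rw [h2]
    rw [hν, integral_Icc_eq_integral_Ioc, ← intervalIntegral.integral_of_le hsb,
      intervalIntegral.integral_const_mul, intervalIntegral.integral_finsetSum]
    · have h3 : ∀ j : ℕ, ∫ u in s..b, (-1:ℝ)^j * (k.choose j : ℝ) *
          ppow k (γ - u - k * s - j * (b - s)) = (1/(k+1:ℝ)) * ((-1:ℝ)^j * (k.choose j : ℝ) *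
          (ppow (k+1) (γ - (k+1 : ℕ) * s - j * (b - s))
            - ppow (k+1) (γ - (k+1 : ℕ) * s - (j+1 : ℕ) * (b - s)))) := by
        intro j
        rw [intervalIntegral.integral_const_mul]
        have : ∀ u, γ - u - k * s - j * (b - s) = (γ - k * s - j * (b - s)) - u := by
          intro u; ring
        simp_rw [this]
        rw [intervalIntegral.integral_comp_sub_left (fun v => ppow k v), ppow_int]
        push_cast
        rw [show γ - k * s - j * (b-s) - s = γ - (k+1) * s - j * (b-s) by ring,
          show γ - k * s - j * (b-s) - b = γ - (k+1) * s - (j+1) * (b-s) by ring]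
        ring
      simp_rw [h3]
      rw [← Finset.mul_sum, ← pascal_sum k (fun j => ppow (k+1) (γ - (k+1 : ℕ) * s - j * (b - s))),
        Nat.factorial_succ]
      push_cast
      rw [← mul_assoc]
      congr 1
      field_simp
    · intro j _
      apply IntervalIntegrable.const_mul
      have : ∀ u, γ - u - k * s - j * (b - s) = (γ - k * s - j * (b - s)) - u := by
        intro u; ring
      simp_rw [this]
      have := (ppow_ii k ((γ - k * s - j * (b - s)) - s) ((γ - k * s - j * (b - s)) - b)).comp_sub_left
        (γ - k * s - j * (b - s))
      simpa using this

lemma cell_prod (N k m : ℕ) (hN : N = 1 + (k + m)) (ν : Measure ℝ) [IsFiniteMeasure ν] (γ : ℝ)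
    (T : Finset (Fin N)) (i : Fin N) (hT : T.card = k) (hi : i ∉ T) :
    (Measure.pi fun _ : Fin N => ν)
      {x | (∀ j ∈ T, x i ≤ x j) ∧ (∀ j, j ∉ T → x j ≤ x i) ∧ ∑ j ∈ T, x j ≤ γ} =
    ∫⁻ s, (Measure.pi fun _ : Fin k => ν) {y | (∀ l, s ≤ y l) ∧ ∑ l, y l ≤ γ} *
      (Measure.pi fun _ : Fin m => ν) {z | ∀ l, z l ≤ s} ∂ν := by
  have hT' : ((insert i T)ᶜ : Finset (Fin N)).card = m := by
    rw [Finset.card_compl, Finset.card_insert_of_notMem hi, Fintype.card_fin]; omega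
  let f := T.orderEmbOfFin hT
  let g := ((insert i T)ᶜ : Finset (Fin N)).orderEmbOfFin hT'
  have hf : ∀ l, f l ∈ T := fun l => Finset.orderEmbOfFin_mem T hT l
  have hg : ∀ l, g l ∈ ((insert i T)ᶜ : Finset (Fin N)) := fun l => Finset.orderEmbOfFin_mem _ hT' l
  have hf' : ∀ j ∈ T, ∃ l, f l = j := by
    intro j hj
    have := Finset.range_orderEmbOfFin T hT
    have h2 : j ∈ Set.range (T.orderEmbOfFin hT) := by rw [this]; exact hj
    exact h2
  have hg' : ∀ j ∉ T, j ≠ i → ∃ l, g l = j := by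
    intro j hj hji
    have := Finset.range_orderEmbOfFin _ hT'
    have h2 : j ∈ Set.range (((insert i T)ᶜ : Finset (Fin N)).orderEmbOfFin hT') := by
      rw [this]; simp [hj, hji]
    exact h2
  let E : Unit ⊕ (Fin k ⊕ Fin m) → Fin N := Sum.elim (fun _ => i) (Sum.elim f g)
  have hE : Function.Bijective E := by
    rw [Fintype.bijective_iff_injective_and_card]
    constructor
    · apply Function.Injective.sumElim
      · intro _ _ _; rfl
      · apply Function.Injective.sumElim f.injective g.injective
        intro a b h
        have := hg b
        rw [← h] at this
        simp [hf a] at this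
      · rintro _ (b | b) h
        · exact hi (by rw [show i = f b from h]; exact hf b)
        · have := hg b
          rw [← show i = g b from h] at this
          simp at this
    · simp [hN]
  let e : Unit ⊕ (Fin k ⊕ Fin m) ≃ Fin N := Equiv.ofBijective E hE
  have m1 := measurePreserving_piCongrLeft (fun _ : Fin N => ν) e
  have m2 := measurePreserving_sumPiEquivProdPi_symm (fun _ : Unit ⊕ (Fin k ⊕ Fin m) => ν)
  have m3 := measurePreserving_sumPiEquivProdPi_symm (fun _ : (Fin k ⊕ Fin m) => ν)
  have m4 := (measurePreserving_funUnique ν Unit).symm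
  have m5 := (m1.comp m2).comp (m4.prod m3)
  set Φ := ((MeasurableEquiv.piCongrLeft (fun _ : Fin N => ℝ) e ∘
    (MeasurableEquiv.sumPiEquivProdPi fun _ : Unit ⊕ (Fin k ⊕ Fin m) => ℝ).symm) ∘
    Prod.map (MeasurableEquiv.funUnique Unit ℝ).symm
      (MeasurableEquiv.sumPiEquivProdPi fun _ : (Fin k ⊕ Fin m) => ℝ).symm) with hΦ
  have e0 : ∀ p, Φ p i = p.1 := by
    intro p
    have := MeasurableEquiv.piCongrLeft_apply_apply e (β := fun _ => ℝ)
      ((MeasurableEquiv.sumPiEquivProdPi fun _ : Unit ⊕ (Fin k ⊕ Fin m) => ℝ).symm 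
       (Prod.map (MeasurableEquiv.funUnique Unit ℝ).symm
      (MeasurableEquiv.sumPiEquivProdPi fun _ : (Fin k ⊕ Fin m) => ℝ).symm p)) (Sum.inl ())
    exact this
  have e1 : ∀ p l, Φ p (f l) = p.2.1 l := by
    intro p l
    have := MeasurableEquiv.piCongrLeft_apply_apply e (β := fun _ => ℝ)
      ((MeasurableEquiv.sumPiEquivProdPi fun _ : Unit ⊕ (Fin k ⊕ Fin m) => ℝ).symm 
       (Prod.map (MeasurableEquiv.funUnique Unit ℝ).symm
      (MeasurableEquiv.sumPiEquivProdPi fun _ : (Fin k ⊕ Fin m) => ℝ).symm p)) (Sum.inr (Sum.inl l))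
    exact this
  have e2 : ∀ p l, Φ p (g l) = p.2.2 l := by
    intro p l
    have := MeasurableEquiv.piCongrLeft_apply_apply e (β := fun _ => ℝ)
      ((MeasurableEquiv.sumPiEquivProdPi fun _ : Unit ⊕ (Fin k ⊕ Fin m) => ℝ).symm 
       (Prod.map (MeasurableEquiv.funUnique Unit ℝ).symm
      (MeasurableEquiv.sumPiEquivProdPi fun _ : (Fin k ⊕ Fin m) => ℝ).symm p)) (Sum.inr (Sum.inr l))
    exact this
  have hA : MeasurableSet {x : Fin N → ℝ | (∀ j ∈ T, x i ≤ x j) ∧ (∀ j, j ∉ T → x j ≤ x i) ∧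
      ∑ j ∈ T, x j ≤ γ} := by
    simp only [Set.ofPred_and, Set.ofPred_forall]
    refine MeasurableSet.inter ?_ (MeasurableSet.inter ?_ ?_)
    · exact MeasurableSet.iInter fun j => MeasurableSet.iInter fun _ =>
        measurableSet_le (by fun_prop) (by fun_prop)
    · exact MeasurableSet.iInter fun j => MeasurableSet.iInter fun _ =>
        measurableSet_le (by fun_prop) (by fun_prop)
    · exact measurableSet_le (by fun_prop) (by fun_prop)
  rw [← m5.measure_preimage hA.nullMeasurableSet, Measure.prod_apply (m5.measurable hA)]
  apply lintegral_congr
  intro s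
  rw [← Measure.prod_prod]
  congr 1
  ext ⟨y, z⟩
  have hsum : ∑ j ∈ T, Φ (s, y, z) j = ∑ l, y l := by
    have hTi : T = Finset.univ.map f.toEmbedding := by
      ext j
      simp only [Finset.mem_map, Finset.mem_univ, true_and]
      exact ⟨fun h => hf' j h, by rintro ⟨l, rfl⟩; exact hf l⟩
    conv_lhs => rw [hTi]
    rw [Finset.sum_map]
    exact Finset.sum_congr rfl fun l _ => e1 _ _
  simp only [Set.mem_preimage, Set.mem_ofPred_eq, Set.mem_prod]
  rw [hsum, e0]
  constructor
  · rintro ⟨h1, h2, h3⟩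
    refine ⟨⟨fun l => ?_, h3⟩, fun l => ?_⟩
    · have := h1 _ (hf l)
      rwa [e1] at this
    · have hh := hg l
      have := h2 (g l) (by simp at hh; tauto)
      rwa [e2] at this
  · rintro ⟨⟨h1, h3⟩, h2⟩
    refine ⟨fun j hj => ?_, fun j hj => ?_, h3⟩
    · obtain ⟨l, rfl⟩ := hf' j hj
      rw [e1]; exact h1 l
    · by_cases hji : j = i
      · rw [hji, e0]
      · obtain ⟨l, rfl⟩ := hg' j hj hji
        rw [e2]; exact h2 l

lemma low_part (m : ℕ) (a b s : ℝ) (hs : s ∈ Set.Icc a b) :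
    ((Measure.pi fun _ : Fin m => (volume.restrict (Set.Icc a b) : Measure ℝ))
      {z | ∀ l, z l ≤ s}).toReal = (s - a) ^ m := by
  have : {z : Fin m → ℝ | ∀ l, z l ≤ s} = Set.univ.pi fun _ => Set.Iic s := by ext; simp [Pi.le_def]
  rw [this, Measure.pi_pi]
  have h2 : (volume.restrict (Set.Icc a b) : Measure ℝ) (Set.Iic s) = ENNReal.ofReal (s - a) := by
    rw [Measure.restrict_apply measurableSet_Iic]
    have : Set.Iic s ∩ Set.Icc a b = Set.Icc a s := by
      ext x; simp only [Set.mem_inter_iff, Set.mem_Iic, Set.mem_Icc]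
      have := hs.2
      constructor
      · rintro ⟨h, h1, _⟩; exact ⟨h1, h⟩
      · rintro ⟨h, h1⟩; exact ⟨h1, h, h1.trans this⟩
    rw [this, Real.volume_Icc]
  simp [h2, ENNReal.toReal_ofReal (sub_nonneg.2 hs.1)]

lemma high_part (k : ℕ) (a b s γ : ℝ) (hs : s ∈ Set.Icc a b) (hsb : s < b) (g : ℕ → ℝ → ℝ)
    (hg : ∀ j s, g j s = max (max (min ((γ - k * s) / (b - s)) (k : ℝ)) 0 - j) 0) :
    ((Measure.pi fun _ : Fin k => (volume.restrict (Set.Icc a b) : Measure ℝ))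
      {y | (∀ l, s ≤ y l) ∧ ∑ l, y l ≤ γ}).toReal ≤
    (1 / (k.factorial : ℝ)) * ∑ j ∈ Finset.range (k+1), (-1:ℝ)^j * (k.choose j : ℝ) *
      (g j s ^ k * (b - s) ^ k) := by
  have hb : 0 < b - s := sub_pos.2 hsb
  set τ := max (min ((γ - k * s) / (b - s)) (k : ℝ)) 0 with hτ
  have hτ0 : 0 ≤ τ := le_max_right _ _
  have h1 : (Measure.pi fun _ : Fin k => (volume.restrict (Set.Icc a b) : Measure ℝ))
      {y | (∀ l, s ≤ y l) ∧ ∑ l, y l ≤ γ} =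
      (Measure.pi fun _ : Fin k => (volume.restrict (Set.Icc s b) : Measure ℝ))
      {y | ∑ l, y l ≤ γ} := by
    have : (volume.restrict (Set.Icc s b) : Measure ℝ) =
        (volume.restrict (Set.Icc a b)).restrict (Set.Ici s) := by
      rw [Measure.restrict_restrict measurableSet_Ici]
      congr 1
      ext x; simp only [Set.mem_inter_iff, Set.mem_Ici, Set.mem_Icc]
      have := hs.1
      constructor
      · rintro ⟨h, h1⟩; exact ⟨h, this.trans h, h1⟩
      · rintro ⟨h, h1, h2⟩; exact ⟨h, h2⟩
    have hms : MeasurableSet {y : Fin k → ℝ | ∑ l, y l ≤ γ} :=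
      measurableSet_le (by fun_prop) (by fun_prop)
    rw [this, ← Measure.restrict_pi_pi (fun _ : Fin k => (volume.restrict (Set.Icc a b) : Measure ℝ))
      (fun _ => Set.Ici s), Measure.restrict_apply hms]
    congr 1
    ext y; simp [and_comm, Pi.le_def]
  have h2 : (Measure.pi fun _ : Fin k => (volume.restrict (Set.Icc s b) : Measure ℝ))
      {y | ∑ l, y l ≤ γ} ≤ (Measure.pi fun _ : Fin k => (volume.restrict (Set.Icc s b) : Measure ℝ))
      {y | ∑ l, y l ≤ k * s + (b - s) * τ} := by
    apply measure_mono_ae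
    have : ∀ᵐ y ∂(Measure.pi fun _ : Fin k => (volume.restrict (Set.Icc s b) : Measure ℝ)),
        ∀ l, y l ∈ Set.Icc s b := by
      rw [← Measure.restrict_pi_pi]
      filter_upwards [ae_restrict_mem (MeasurableSet.univ_pi fun _ => measurableSet_Icc)] with y hy l
      exact hy l (Set.mem_univ _)
    filter_upwards [this] with y hy hyγ
    change ∑ l, y l ≤ γ at hyγ
    change ∑ l, y l ≤ k * s + (b - s) * τ
    have hub : ∑ l, y l ≤ k * b := by
      calc ∑ l, y l ≤ ∑ l : Fin k, b := Finset.sum_le_sum fun l _ => (hy l).2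
        _ = k * b := by simp
    have : (∑ l, y l - k * s) / (b - s) ≤ τ := by
      refine le_trans (le_min ?_ ?_) (le_max_left _ _)
      · gcongr
      · rw [div_le_iff₀ hb]; linarith
    rw [div_le_iff₀ hb] at this
    linarith
  rw [h1]
  refine (ENNReal.toReal_mono (measure_ne_top _ _) h2).trans ?_
  rw [irwin_hall k s b hsb.le]
  apply le_of_eq
  congr 1
  apply Finset.sum_congr rfl
  intro j hj
  congr 1
  have : (k:ℝ) * s + (b - s) * τ - k * s - j * (b - s) = (τ - j) * (b - s) := by ring
  rw [this, hg, ← hτ, ppow]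
  by_cases h : 0 ≤ τ - j
  · rw [if_pos (mul_nonneg h hb.le), max_eq_left h, mul_pow]
  · rw [if_neg, max_eq_right (not_le.1 h).le]
    · rcases Nat.eq_zero_or_pos k with rfl | hk
      · exfalso
        have : j = 0 := by simpa using hj
        subst this
        simp at h; linarith
      · rw [zero_pow hk.ne', zero_mul]
    · rw [not_le] at h ⊢
      exact mul_neg_of_neg_of_pos h hb

lemma g_integrable (k m : ℕ) (a b γ : ℝ) (hab : a < b) (g : ℕ → ℝ → ℝ)
    (hg : ∀ j s, g j s = max (max (min ((γ - k * s) / (b - s)) (k : ℝ)) 0 - j) 0) (j : ℕ) :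
    IntegrableOn (fun s => g j s ^ k * (s - a) ^ m * (b - s) ^ k) (Set.Icc a b) := by
  have hgm : Measurable (g j) := by
    have : g j = fun s => max (max (min ((γ - k * s) / (b - s)) (k : ℝ)) 0 - j) 0 := funext (hg j)
    rw [this]; fun_prop
  refine Measure.integrableOn_of_bounded (M := (k:ℝ) ^ k * (b - a) ^ m * (b - a) ^ k) (by simp)
    (by fun_prop) ?_
  filter_upwards [ae_restrict_mem measurableSet_Icc] with s hs
  have h0 : 0 ≤ g j s := by rw [hg]; exact le_max_right _ _
  have h1 : g j s ≤ k := by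
    rw [hg]
    have hk : (0:ℝ) ≤ k := Nat.cast_nonneg k
    have hj : (0:ℝ) ≤ j := Nat.cast_nonneg j
    have : max (min ((γ - k * s) / (b - s)) (k : ℝ)) 0 ≤ k := max_le (min_le_right _ _) hk
    exact max_le (by linarith) hk
  have h2 : 0 ≤ s - a := sub_nonneg.2 hs.1
  have h3 : 0 ≤ b - s := sub_nonneg.2 hs.2
  have h4 : s - a ≤ b - a := by linarith [hs.2]
  have h5 : b - s ≤ b - a := by linarith [hs.1]
  rw [Real.norm_of_nonneg (by positivity)]
  gcongr

lemma cell_bound (N k m : ℕ) (hN : N = 1 + (k + m)) (a b γ : ℝ) (hab : a < b)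
    (g : ℕ → ℝ → ℝ)
    (hg : ∀ j s, g j s = max (max (min ((γ - k * s) / (b - s)) (k : ℝ)) 0 - j) 0)
    (T : Finset (Fin N)) (i : Fin N) (hT : T.card = k) (hi : i ∉ T) :
    ((Measure.pi fun _ : Fin N => (volume.restrict (Set.Icc a b) : Measure ℝ))
      {x | (∀ j ∈ T, x i ≤ x j) ∧ (∀ j, j ∉ T → x j ≤ x i) ∧ ∑ j ∈ T, x j ≤ γ}).toReal ≤
    (1 / (k.factorial : ℝ)) * ∑ j ∈ Finset.range (k + 1), (-1 : ℝ) ^ j * (k.choose j : ℝ) *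
          ∫ s in Set.Icc a b, (g j s) ^ k * (s - a) ^ m * (b - s) ^ k := by
  rw [cell_prod N k m hN _ γ T i hT hi]
  have hm1 : MeasurableSet {p : ℝ × (Fin k → ℝ) | (∀ l, p.1 ≤ p.2 l) ∧ ∑ l, p.2 l ≤ γ} := by
    simp only [Set.ofPred_and, Set.ofPred_forall]
    exact MeasurableSet.inter (MeasurableSet.iInter fun j =>
      measurableSet_le (by fun_prop) (by fun_prop)) (measurableSet_le (by fun_prop) (by fun_prop))
  have hm2 : MeasurableSet {p : ℝ × (Fin m → ℝ) | (∀ l, p.2 l ≤ p.1)} := by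
    simp only [Set.ofPred_forall]
    exact (MeasurableSet.iInter fun j => measurableSet_le (by fun_prop) (by fun_prop))
  rw [← integral_toReal]
  · simp_rw [← integral_const_mul]
    rw [← integral_finsetSum, ← integral_const_mul]
    · apply integral_mono_of_nonneg
      · exact Filter.Eventually.of_forall fun _ => ENNReal.toReal_nonneg
      · apply Integrable.const_mul
        apply integrable_finsetSum
        intro j _
        exact (g_integrable k m a b γ hab g hg j).const_mul _
      · have hne : ∀ᵐ s ∂(volume.restrict (Set.Icc a b) : Measure ℝ), s ≠ b :=
          ae_restrict_of_ae (by simp [ae_iff])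
        filter_upwards [hne, ae_restrict_mem measurableSet_Icc] with s hsb hs
        rw [ENNReal.toReal_mul, low_part m a b s hs]
        have h1 := high_part k a b s γ hs (lt_of_le_of_ne hs.2 hsb) g hg
        have h2 := mul_le_mul_of_nonneg_right h1 (pow_nonneg (sub_nonneg.2 hs.1) m)
        refine h2.trans (le_of_eq ?_)
        rw [mul_assoc, Finset.sum_mul]
        congr 1
        apply Finset.sum_congr rfl
        intros; ring
    · intro j _
      exact (g_integrable k m a b γ hab g hg j).const_mul _
  · exact ((measurable_measure_prodMk_left hm1).mul (measurable_measure_prodMk_left hm2)).aemeasurable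
  · exact Filter.Eventually.of_forall fun _ =>
      ENNReal.mul_lt_top (measure_lt_top _ _) (measure_lt_top _ _)

lemma pi_unif (N : ℕ) (a b : ℝ) (hab : a < b) :
    (Measure.pi fun _ : Fin N => unif a b) = (ENNReal.ofReal (1 / (b - a))) ^ N •
      (Measure.pi fun _ : Fin N => (volume.restrict (Set.Icc a b) : Measure ℝ)) := by
  have hc : (volume (Set.Icc a b))⁻¹ = ENNReal.ofReal (1 / (b - a)) := by
    rw [Real.volume_Icc, one_div, ENNReal.ofReal_inv_of_pos (sub_pos.2 hab)]
  have hfin : IsFiniteMeasure (unif a b) := by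
    constructor
    rw [unif, hc]
    simp [ENNReal.mul_lt_top]
  apply Measure.pi_eq
  intro s hs
  simp only [unif, hc, Measure.pi_pi, Finset.prod_mul_distrib, Measure.smul_apply, smul_eq_mul,
    Finset.prod_const, Finset.card_univ, Fintype.card_fin]

theorem stmt_15 (N k : ℕ) (hN : 1 ≤ N) (hk : k ≤ N - 1)
    (a b γ : ℝ) (ha : 0 ≤ a) (hab : a < b)
    (P : Measure (Fin N → ℝ)) (hP : P = Measure.pi fun _ => unif a b)
    (g : ℕ → ℝ → ℝ)
    (hg : ∀ j s, g j s = max (max (min ((γ - k * s) / (b - s)) (k : ℝ)) 0 - j) 0) :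
    (P {x | sumKLargest N k x ≤ γ}).toReal ≤
      (N.factorial : ℝ) / (((N - k - 1).factorial : ℝ) * ((k.factorial : ℝ)) ^ 2) *
        (1 / (b - a)) ^ N *
        ∑ j ∈ Finset.range (k + 1), (-1 : ℝ) ^ j * (k.choose j : ℝ) *
          ∫ s in Set.Icc a b, (g j s) ^ k * (s - a) ^ (N - k - 1) * (b - s) ^ k := by
  obtain ⟨m, hm⟩ : ∃ m, m = N - k - 1 := ⟨_, rfl⟩
  rw [← hm]
  have hNm : N = 1 + (k + m) := by omega
  set S := ∑ j ∈ Finset.range (k + 1), (-1 : ℝ) ^ j * (k.choose j : ℝ) *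
          ∫ s in Set.Icc a b, (g j s) ^ k * (s - a) ^ m * (b - s) ^ k with hS
  have hba : 0 < b - a := sub_pos.2 hab
  rw [hP, pi_unif N a b hab, Measure.smul_apply, smul_eq_mul, ENNReal.toReal_mul,
    ENNReal.toReal_pow, ENNReal.toReal_ofReal (by positivity)]
  set Q := (Measure.pi fun _ : Fin N => (volume.restrict (Set.Icc a b) : Measure ℝ)) with hQ
  let I : Finset (Σ _ : Finset (Fin N), Fin N) :=
    (Finset.powersetCard k Finset.univ).sigma fun T => Tᶜ
  let A : (Σ _ : Finset (Fin N), Fin N) → Set (Fin N → ℝ) := fun q =>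
    {x | (∀ j ∈ q.1, x q.2 ≤ x j) ∧ (∀ j, j ∉ q.1 → x j ≤ x q.2) ∧ ∑ j ∈ q.1, x j ≤ γ}
  have hsub : {x | sumKLargest N k x ≤ γ} ⊆ ⋃ q ∈ I, A q := by
    intro x hx
    obtain ⟨T, i, h1, h2, h3, h4, h5⟩ := cover_aux N k (by omega) x
    simp only [Set.mem_iUnion]
    refine ⟨⟨T, i⟩, ?_, h3, h4, h5.trans_le hx⟩
    simp [I, h1, h2]
  have hcard : I.card = N.choose k * (m + 1) := by
    rw [Finset.card_sigma, Finset.sum_const_nat (m := m + 1)]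
    · simp
    · intro T hT
      rw [Finset.mem_powersetCard] at hT
      rw [Finset.card_compl, hT.2, Fintype.card_fin]; omega
  have hmain : (Q {x | sumKLargest N k x ≤ γ}).toReal ≤ I.card * (1 / (k.factorial : ℝ) * S) := by
    calc (Q {x | sumKLargest N k x ≤ γ}).toReal ≤ (∑ q ∈ I, Q (A q)).toReal := by
          apply ENNReal.toReal_mono
          · exact (ENNReal.sum_lt_top.2 fun q _ => measure_lt_top _ _).ne
          · exact (measure_mono hsub).trans (measure_biUnion_finset_le _ _)
      _ = ∑ q ∈ I, (Q (A q)).toReal := ENNReal.toReal_sum fun q _ => measure_ne_top _ _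
      _ ≤ ∑ q ∈ I, (1 / (k.factorial : ℝ) * S) := by
          apply Finset.sum_le_sum
          intro q hq
          simp only [I, Finset.mem_sigma, Finset.mem_powersetCard, Finset.mem_compl] at hq
          exact cell_bound N k m hNm a b γ hab g hg q.1 q.2 hq.1.2 hq.2
      _ = _ := by rw [Finset.sum_const, nsmul_eq_mul]
  have hfac : (N.choose k * (m + 1) : ℝ) = N.factorial / (m.factorial * k.factorial) := by
    rw [Nat.cast_choose ℝ (show k ≤ N by omega), show N - k = m + 1 by omega, Nat.factorial_succ]
    push_cast
    have := Nat.factorial_ne_zero m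
    have := Nat.factorial_ne_zero k
    field_simp
  rw [hcard] at hmain
  push_cast at hmain
  rw [hfac] at hmain
  calc _ ≤ (1 / (b - a)) ^ N * (N.factorial / (m.factorial * k.factorial) *
        (1 / (k.factorial : ℝ) * S)) := by gcongr
    _ = _ := by
      have := Nat.factorial_ne_zero m
      have := Nat.factorial_ne_zero k
      field_simp
end
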